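/- arXiv:math-ph/0506042 — 2 statements merged into one kernel-verified Lean document; each statement's English description precedes it below -/
import Mathlib

section
/- Fix ν ∈ ℝ and u¹, u², u³ ∈ ℝ with −ν < u¹ < u² < u³. Set γ₁ = −I₁/I₀, P₁(λ) = λ + γ₁, and let κ ∈ ℝ satisfy ∫_{u¹}^{u²} P_ν(λ)/√(R(λ)) dλ = 0 with P_ν(λ) = κ − (ν+u¹)(ν+u²)(ν+u³)/(2(λ+ν)). Define the characteristic speeds C^i(u¹,u²,u³) = u¹ + u² + u³ + 2ν − P₁(−ν) · ∏_{j≠i}(u^i − u^j) / P_ν(u^i), for i = 1, 2, 3. Then C¹(u¹,u²,u³) < C³(u¹,u²,u³) and C²(u¹,u²,u³) < C³(u¹,u²,u³); that is, the Camassa–Holm modulation (Whitham) equations ∂_t u^i + C^i(u) ∂_x u^i = 0 are hyperbolic with these orderings of the speeds. -/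
/-!
Both numerators `P₁` and `P_ν` are strictly increasing on `(-ν, ∞)` and integrate to zero over
`(u¹, u²)` against the positive integrable weight `w = 1/√R`, so each of them changes sign between
`u¹` and `u²`. Hence `P₁(-ν) < P₁(u¹) < 0` and `P_ν(u¹) < 0 < P_ν(u²) < P_ν(u³)`, which places
`u¹ + u² + u³ + 2ν` strictly above `C¹` and `C²` and strictly below `C³`.
-/

open MeasureTheory Set

section WeightedIntegral

variable {a b : ℝ} {f w : ℝ → ℝ}

lemma intervalIntegrable_mul_of_monotoneOn (hf : MonotoneOn f (uIcc a b))
    (hw : IntervalIntegrable w volume a b) :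
    IntervalIntegrable (fun x => f x * w x) volume a b := by
  have hbound : ∀ x ∈ uIcc a b, ‖f x‖ ≤ max |f (a ⊓ b)| |f (a ⊔ b)| := fun x hx =>
    abs_le_max_abs_abs (hf (left_mem_Icc.2 inf_le_sup) hx hx.1)
      (hf hx (right_mem_Icc.2 inf_le_sup) hx.2)
  rw [intervalIntegrable_iff] at hw ⊢
  refine hw.bdd_mul ?_ ((ae_restrict_mem measurableSet_uIoc).mono fun x hx =>
    hbound x (uIoc_subset_uIcc hx))
  exact (aemeasurable_restrict_of_monotoneOn measurableSet_uIoc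
    (hf.mono uIoc_subset_uIcc)).aestronglyMeasurable

lemma neg_left_and_pos_right_of_integral_mul_eq_zero (hab : a < b) (hf : StrictMonoOn f (Icc a b))
    (hw : IntervalIntegrable w volume a b) (hwpos : ∀ x ∈ Ioo a b, 0 < w x)
    (hzero : ∫ x in a..b, f x * w x = 0) : f a < 0 ∧ 0 < f b := by
  have hfw : IntervalIntegrable (fun x => f x * w x) volume a b :=
    intervalIntegrable_mul_of_monotoneOn (uIcc_of_le hab.le ▸ hf.monotoneOn) hw
  constructor
  · by_contra! ha
    refine (intervalIntegral.intervalIntegral_pos_of_pos_on hfw (fun x hx => ?_) hab).ne' hzero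
    have hax : f a < f x := hf (left_mem_Icc.2 hab.le) (Ioo_subset_Icc_self hx) hx.1
    exact mul_pos (ha.trans_lt hax) (hwpos x hx)
  · by_contra! hb
    refine (intervalIntegral.intervalIntegral_pos_of_pos_on hfw.neg (fun x hx => ?_) hab).ne' ?_
    · have hxb : f x < f b := hf (Ioo_subset_Icc_self hx) (right_mem_Icc.2 hab.le) hx.2
      exact neg_pos.2 (mul_neg_of_neg_of_pos (hxb.trans_le hb) (hwpos x hx))
    · simpa using hzero

lemma integral_sub_mean_mul_eq_zero (hfw : IntervalIntegrable (fun x => f x * w x) volume a b)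
    (hw : IntervalIntegrable w volume a b) (hmass : ∫ x in a..b, w x ≠ 0) :
    ∫ x in a..b, (f x - (∫ y in a..b, f y * w y) / ∫ y in a..b, w y) * w x = 0 := by
  simp only [sub_mul]
  rw [intervalIntegral.integral_sub hfw (hw.const_mul _), intervalIntegral.integral_const_mul,
    div_mul_cancel₀ _ hmass, sub_self]

end WeightedIntegral

lemma intervalIntegrable_inv_sqrt_sub_mul_sub (a b : ℝ) :
    IntervalIntegrable (fun x => (√((x - a) * (b - x)))⁻¹) volume a b := by
  rcases eq_or_ne a b with rfl | hab
  · exact IntervalIntegrable.refl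
  have hba : b - a ≠ 0 := sub_ne_zero.2 hab.symm
  -- `(x - a) * (b - x) = ((b - a) / 2) ^ 2 * (1 - t ^ 2)` for affine `t` taking `a, b` to `-1, 1`.
  have harcsine : IntervalIntegrable (fun x => √(1 - (2 / (b - a) * (x - (a + b) / 2)) ^ 2)⁻¹)
      volume a b := by
    convert (Polynomial.Chebyshev.intervalIntegrable_sqrt_one_sub_sq_inv.comp_mul_left
      (c := 2 / (b - a))).comp_sub_right ((a + b) / 2) using 1 <;> field_simp <;> ring
  convert harcsine.const_mul √(((b - a) / 2) ^ 2)⁻¹ using 2 with x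
  rw [← Real.sqrt_mul (by positivity), ← Real.sqrt_inv, ← mul_inv]
  congr 2
  field_simp
  ring

lemma intervalIntegrable_inv_sqrt_sub_mul_sub_mul {a b : ℝ} {q : ℝ → ℝ}
    (hq : ContinuousOn q (uIcc a b)) (hqpos : ∀ x ∈ uIcc a b, 0 < q x) :
    IntervalIntegrable (fun x => (√((x - a) * (b - x) * q x))⁻¹) volume a b := by
  have hfactor : ContinuousOn (fun x => (√(q x))⁻¹) (uIcc a b) :=
    hq.sqrt.inv₀ fun x hx => (Real.sqrt_pos.2 (hqpos x hx)).ne'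
  refine ((intervalIntegrable_inv_sqrt_sub_mul_sub a b).mul_continuousOn hfactor).congr
    fun x hx => ?_
  rw [Real.sqrt_mul' _ (hqpos x (uIoc_subset_uIcc hx)).le, mul_inv]

lemma quartic_pos_of_mem_Ioo {a b c d x : ℝ} (hab : a ≤ b) (hcd : c ≤ d) (hx : x ∈ Ioo b c) :
    0 < (x - a) * (x - b) * (x - c) * (x - d) := by
  have hxa : 0 < x - a := sub_pos.2 (hab.trans_lt hx.1)
  have hxb : 0 < x - b := sub_pos.2 hx.1
  have hxc : x - c < 0 := sub_neg.2 hx.2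
  have hxd : x - d < 0 := sub_neg.2 (hx.2.trans_le hcd)
  exact mul_pos_of_neg_of_neg (mul_neg_of_pos_of_neg (mul_pos hxa hxb) hxc) hxd

lemma intervalIntegrable_inv_sqrt_quartic {a b c d : ℝ} (hab : a < b) (hbc : b ≤ c)
    (hcd : c < d) :
    IntervalIntegrable (fun x => (√((x - a) * (x - b) * (x - c) * (x - d)))⁻¹) volume b c := by
  have hpos : ∀ x ∈ uIcc b c, 0 < (x - a) * (d - x) := fun x hx => by
    rw [uIcc_of_le hbc] at hx
    exact mul_pos (sub_pos.2 (hab.trans_le hx.1)) (sub_pos.2 (hx.2.trans_lt hcd))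
  convert intervalIntegrable_inv_sqrt_sub_mul_sub_mul (by fun_prop) hpos using 4 with x
  ring

lemma strictMonoOn_const_sub_div_add_const {K : ℝ} (hK : 0 < K) (κ ν : ℝ) :
    StrictMonoOn (fun l => κ - K / (l + ν)) (Ioi (-ν)) := fun x hx y _ hxy =>
  sub_lt_sub_left (div_lt_div_of_pos_left hK (neg_lt_iff_pos_add.1 hx) (by gcongr)) κ

lemma sub_mul_div_lt_sub_mul_div_of_sign (s : ℝ) {u1 u2 u3 p q1 q2 q3 : ℝ} (h12 : u1 < u2)
    (h23 : u2 < u3) (hp : p < 0) (hq1 : q1 < 0) (hq2 : 0 < q2) (hq3 : 0 < q3) :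
    s - p * ((u1 - u2) * (u1 - u3)) / q1 < s - p * ((u3 - u1) * (u3 - u2)) / q3 ∧
      s - p * ((u2 - u1) * (u2 - u3)) / q2 < s - p * ((u3 - u1) * (u3 - u2)) / q3 := by
  have h13 : u1 < u3 := h12.trans h23
  have hpos1 : 0 < p * ((u1 - u2) * (u1 - u3)) / q1 := div_pos_of_neg_of_neg
    (mul_neg_of_neg_of_pos hp (mul_pos_of_neg_of_neg (sub_neg.2 h12) (sub_neg.2 h13))) hq1
  have hpos2 : 0 < p * ((u2 - u1) * (u2 - u3)) / q2 := div_pos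
    (mul_pos_of_neg_of_neg hp (mul_neg_of_pos_of_neg (sub_pos.2 h12) (sub_neg.2 h23))) hq2
  have hneg3 : p * ((u3 - u1) * (u3 - u2)) / q3 < 0 := div_neg_of_neg_of_pos
    (mul_neg_of_neg_of_pos hp (mul_pos (sub_pos.2 h13) (sub_pos.2 h23))) hq3
  exact ⟨sub_lt_sub_left (hneg3.trans hpos1) s, sub_lt_sub_left (hneg3.trans hpos2) s⟩

theorem stmt_3_general (ν u1 u2 u3 : ℝ) (h0 : -ν < u1) (h12 : u1 < u2) (h23 : u2 < u3)
    (w : ℝ → ℝ) (hw : IntervalIntegrable w volume u1 u2) (hwpos : ∀ l ∈ Ioo u1 u2, 0 < w l)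
    (I0 I1 : ℝ) (hI0 : I0 = ∫ l in u1..u2, w l) (hI1 : I1 = ∫ l in u1..u2, l * w l)
    (γ1 : ℝ) (hγ1 : γ1 = -I1 / I0) (P1 : ℝ → ℝ) (hP1 : ∀ l, P1 l = l + γ1)
    (κ : ℝ) (Pn : ℝ → ℝ)
    (hPn : ∀ l, Pn l = κ - (ν + u1) * (ν + u2) * (ν + u3) / (2 * (l + ν)))
    (hnorm : ∫ l in u1..u2, Pn l * w l = 0)
    (C1 C2 C3 : ℝ)
    (hC1 : C1 = u1 + u2 + u3 + 2 * ν - P1 (-ν) * ((u1 - u2) * (u1 - u3)) / Pn u1)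
    (hC2 : C2 = u1 + u2 + u3 + 2 * ν - P1 (-ν) * ((u2 - u1) * (u2 - u3)) / Pn u2)
    (hC3 : C3 = u1 + u2 + u3 + 2 * ν - P1 (-ν) * ((u3 - u1) * (u3 - u2)) / Pn u3) :
    C1 < C3 ∧ C2 < C3 := by
  have hP1mono : StrictMono P1 := fun x y hxy => by simpa only [hP1, add_lt_add_iff_right]
  have hPnmono : StrictMonoOn Pn (Ioi (-ν)) := by
    have hK : 0 < (ν + u1) * (ν + u2) * (ν + u3) / 2 := by
      have hu1 : 0 < ν + u1 := neg_lt_iff_pos_add'.1 h0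
      have hu2 : 0 < ν + u2 := hu1.trans (by gcongr)
      have hu3 : 0 < ν + u3 := hu2.trans (by gcongr)
      positivity
    simpa only [← funext hPn, div_div] using strictMonoOn_const_sub_div_add_const hK κ ν
  have hP1norm : ∫ l in u1..u2, P1 l * w l = 0 := by
    have hmass : 0 < ∫ l in u1..u2, w l :=
      intervalIntegral.intervalIntegral_pos_of_pos_on hw hwpos h12
    simpa only [hP1, hγ1, hI0, hI1, neg_div, ← sub_eq_add_neg] using
      integral_sub_mean_mul_eq_zero (f := fun l => l)
        (intervalIntegrable_mul_of_monotoneOn (monotone_id.monotoneOn _) hw) hw hmass.ne'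
  have hP1neg : P1 (-ν) < 0 := (hP1mono h0).trans
    (neg_left_and_pos_right_of_integral_mul_eq_zero h12 (hP1mono.strictMonoOn _) hw hwpos hP1norm).1
  obtain ⟨hPn1, hPn2⟩ : Pn u1 < 0 ∧ 0 < Pn u2 := neg_left_and_pos_right_of_integral_mul_eq_zero h12
    (hPnmono.mono fun l hl => h0.trans_le hl.1) hw hwpos hnorm
  have hPn3 : 0 < Pn u3 :=
    hPn2.trans (hPnmono (h0.trans h12) (h0.trans (h12.trans h23)) h23)
  rw [hC1, hC2, hC3]
  exact sub_mul_div_lt_sub_mul_div_of_sign _ h12 h23 hP1neg hPn1 hPn2 hPn3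

/-- hyperbolicity of the Camassa–Holm modulation equations: with
`C^i = u¹+u²+u³+2ν − P₁(−ν)·∏_{j≠i}(u^i−u^j)/P_ν(u^i)` one has `C¹ < C³` and `C² < C³`. -/
theorem stmt_3 (ν u1 u2 u3 : ℝ) (h0 : -ν < u1) (h12 : u1 < u2) (h23 : u2 < u3)
    (R : ℝ → ℝ) (hR : ∀ l, R l = (l + ν) * (l - u1) * (l - u2) * (l - u3))
    (I0 I1 : ℝ)
    (hI0 : I0 = ∫ l in u1..u2, 1 / Real.sqrt (R l))
    (hI1 : I1 = ∫ l in u1..u2, l / Real.sqrt (R l))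
    (γ1 : ℝ) (hγ1 : γ1 = -I1 / I0)
    (P1 : ℝ → ℝ) (hP1 : ∀ l, P1 l = l + γ1)
    (κ : ℝ) (Pn : ℝ → ℝ)
    (hPn : ∀ l, Pn l = κ - (ν + u1) * (ν + u2) * (ν + u3) / (2 * (l + ν)))
    (hnorm : (∫ l in u1..u2, Pn l / Real.sqrt (R l)) = 0)
    (C1 C2 C3 : ℝ)
    (hC1 : C1 = u1 + u2 + u3 + 2 * ν - P1 (-ν) * ((u1 - u2) * (u1 - u3)) / Pn u1)
    (hC2 : C2 = u1 + u2 + u3 + 2 * ν - P1 (-ν) * ((u2 - u1) * (u2 - u3)) / Pn u2)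
    (hC3 : C3 = u1 + u2 + u3 + 2 * ν - P1 (-ν) * ((u3 - u1) * (u3 - u2)) / Pn u3) :
    C1 < C3 ∧ C2 < C3 := by
  simp only [← sub_neg_eq_add _ ν] at hR
  obtain rfl := funext hR
  exact stmt_3_general ν u1 u2 u3 h0 h12 h23 _ (intervalIntegrable_inv_sqrt_quartic h0 h12.le h23)
    (fun l hl => inv_pos.2 (Real.sqrt_pos.2 (quartic_pos_of_mem_Ioo h0.le h23.le hl)))
    I0 I1 (by simpa only [one_div] using hI0) hI1 γ1 hγ1 P1 hP1 κ Pn hPn hnorm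
    C1 C2 C3 hC1 hC2 hC3
end

section
/- Fix ν ∈ ℝ and u¹, v ∈ ℝ with −ν < u¹ < v. Define for −ν < u¹ < u² < u³ the first Camassa–Holm Whitham characteristic speed C¹(u¹,u²,u³) = u¹+u²+u³+2ν + 2(u¹+ν)(u¹−u²) Π(ρ², s) / ((u²+ν)(K(s) − E(s))), where s² = (u²−u¹)(u³+ν)/((u³−u¹)(u²+ν)) and ρ² = (u²−u¹)/(u²+ν). Then lim_{ε→0⁺} C¹(u¹, v−ε, v+ε) = 3u¹ + 2ν; i.e., when the two largest Riemann invariants coalesce the modulation equation for u¹ reduces to the dispersionless Camassa–Holm equation ∂_t u + (3u+2ν)∂_x u = 0. -/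
/-!
Write `m = s²` and `n = ρ²`. When `u²` and `u³` coalesce, `m → 1⁻` and `K(m)` diverges, while `E(m)`
stays bounded. The divergence of `K` and `Π` comes from `ψ = π/2`, where the extra factor
`1 / (1 - n sin² ψ)` of `Π` equals `1 / (1 - n)`; hence `(1 - n) Π(n, m) - K(m)` stays bounded too,
and `(1 - n) Π / (K - E) → 1`. Since `(u¹ + ν) / (u² + ν) = 1 - n`, the speed is
`u¹ + u² + u³ + 2ν + 2 (u¹ - u²) (1 - n) Π / (K - E)`, which tends to
`u¹ + 2v + 2ν + 2 (u¹ - v) = 3u¹ + 2ν`.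
-/

open Filter Real Set Topology

/-- The complete elliptic integral of the first kind, as a function of the parameter `m = s²`
(not of the modulus `s`). -/
noncomputable def ellipticK (m : ℝ) : ℝ :=
  ∫ ψ in (0 : ℝ)..(π / 2), 1 / √(1 - m * sin ψ ^ 2)

/-- The complete elliptic integral of the second kind, as a function of the parameter `m = s²`
(not of the modulus `s`). -/
noncomputable def ellipticE (m : ℝ) : ℝ :=
  ∫ ψ in (0 : ℝ)..(π / 2), √(1 - m * sin ψ ^ 2)

/-- The complete elliptic integral of the third kind, as a function of the characteristic `n` and
the parameter `m = s²` (not of the modulus `s`). -/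
noncomputable def ellipticPi (n m : ℝ) : ℝ :=
  ∫ ψ in (0 : ℝ)..(π / 2), 1 / ((1 - n * sin ψ ^ 2) * √(1 - m * sin ψ ^ 2))

section Integrands

variable {n m : ℝ}

lemma min_one_one_sub_le_one_sub_mul_sin_sq (m ψ : ℝ) : min 1 (1 - m) ≤ 1 - m * sin ψ ^ 2 := by
  rcases le_total m 0 with hm | hm
  · exact (min_le_left _ _).trans (by nlinarith [sq_nonneg (sin ψ)])
  · exact (min_le_right _ _).trans (by nlinarith [sin_sq_le_one ψ])

lemma one_sub_mul_sin_sq_pos (hm : m < 1) (ψ : ℝ) : 0 < 1 - m * sin ψ ^ 2 :=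
  (lt_min one_pos (sub_pos.2 hm)).trans_le (min_one_one_sub_le_one_sub_mul_sin_sq m ψ)

lemma one_sub_mul_sin_sq_eq (m ψ : ℝ) :
    1 - m * sin ψ ^ 2 = cos ψ ^ 2 + (1 - m) * sin ψ ^ 2 := by
  linear_combination -sin_sq_add_cos_sq ψ

lemma abs_cos_le_sqrt_one_sub_mul_sin_sq (hm : m ≤ 1) (ψ : ℝ) :
    |cos ψ| ≤ √(1 - m * sin ψ ^ 2) := by
  refine abs_le_sqrt ?_
  rw [one_sub_mul_sin_sq_eq]
  exact le_add_of_nonneg_right (mul_nonneg (sub_nonneg.2 hm) (sq_nonneg _))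

lemma sqrt_one_sub_mul_sin_sq_le (hm : m ≤ 1) {ψ : ℝ} (hψ : 0 ≤ cos ψ) :
    √(1 - m * sin ψ ^ 2) ≤ √(1 - m) + cos ψ := by
  refine (sqrt_le_left (by positivity)).2 ?_
  calc 1 - m * sin ψ ^ 2 = cos ψ ^ 2 + (1 - m) * sin ψ ^ 2 := one_sub_mul_sin_sq_eq m ψ
    _ ≤ cos ψ ^ 2 + √(1 - m) ^ 2 := by
      rw [sq_sqrt (sub_nonneg.2 hm)]
      gcongr
      exact mul_le_of_le_one_right (sub_nonneg.2 hm) (sin_sq_le_one ψ)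
    _ ≤ (cos ψ + √(1 - m)) ^ 2 := pow_add_pow_le hψ (sqrt_nonneg _) two_ne_zero
    _ = (√(1 - m) + cos ψ) ^ 2 := by rw [add_comm]

lemma continuous_ellipticK_integrand (hm : m < 1) :
    Continuous fun ψ : ℝ => 1 / √(1 - m * sin ψ ^ 2) :=
  continuous_const.div (by fun_prop) fun ψ => (sqrt_pos.2 (one_sub_mul_sin_sq_pos hm ψ)).ne'

lemma continuous_ellipticPi_integrand (hn : n < 1) (hm : m < 1) :
    Continuous fun ψ : ℝ => 1 / ((1 - n * sin ψ ^ 2) * √(1 - m * sin ψ ^ 2)) :=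
  continuous_const.div (by fun_prop) fun ψ =>
    (mul_pos (one_sub_mul_sin_sq_pos hn ψ) (sqrt_pos.2 (one_sub_mul_sin_sq_pos hm ψ))).ne'

-- The numerator of the difference is `-n cos² ψ`, which vanishes at `ψ = π/2`, where both
-- integrands blow up as `m → 1`.
lemma abs_one_sub_mul_ellipticPi_integrand_sub_le (hn : n < 1) (hm : m < 1) (ψ : ℝ) :
    |(1 - n) * (1 / ((1 - n * sin ψ ^ 2) * √(1 - m * sin ψ ^ 2))) - 1 / √(1 - m * sin ψ ^ 2)| ≤
      |n| / min 1 (1 - n) := by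
  have hp : 0 < 1 - n * sin ψ ^ 2 := one_sub_mul_sin_sq_pos hn ψ
  have hS : 0 < √(1 - m * sin ψ ^ 2) := sqrt_pos.2 (one_sub_mul_sin_sq_pos hm ψ)
  have hmin : 0 < min 1 (1 - n) := lt_min one_pos (sub_pos.2 hn)
  have hcos : cos ψ ^ 2 / √(1 - m * sin ψ ^ 2) ≤ 1 := by
    refine (div_le_one hS).2 ?_
    calc cos ψ ^ 2 = |cos ψ| ^ 2 := (sq_abs _).symm
      _ ≤ |cos ψ| := pow_le_of_le_one (abs_nonneg _) (abs_cos_le_one ψ) two_ne_zero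
      _ ≤ √(1 - m * sin ψ ^ 2) := abs_cos_le_sqrt_one_sub_mul_sin_sq hm.le ψ
  have hdiff : (1 - n) * (1 / ((1 - n * sin ψ ^ 2) * √(1 - m * sin ψ ^ 2)))
      - 1 / √(1 - m * sin ψ ^ 2)
      = -n / (1 - n * sin ψ ^ 2) * (cos ψ ^ 2 / √(1 - m * sin ψ ^ 2)) := by
    rw [cos_sq']
    field_simp
    ring
  rw [hdiff, abs_mul, abs_div, abs_neg, abs_of_pos hp,
    abs_of_nonneg (a := cos ψ ^ 2 / _) (by positivity)]
  calc |n| / (1 - n * sin ψ ^ 2) * (cos ψ ^ 2 / √(1 - m * sin ψ ^ 2))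
      ≤ |n| / (1 - n * sin ψ ^ 2) := mul_le_of_le_one_right (by positivity) hcos
    _ ≤ |n| / min 1 (1 - n) := div_le_div_of_nonneg_left (abs_nonneg n) hmin
        (min_one_one_sub_le_one_sub_mul_sin_sq n ψ)

end Integrands

section Integrals

variable {n m : ℝ}

lemma cos_nonneg_of_mem_uIcc_zero_pi_div_two {ψ : ℝ} (hψ : ψ ∈ uIcc 0 (π / 2)) : 0 ≤ cos ψ := by
  rw [uIcc_of_le pi_div_two_pos.le] at hψ
  exact cos_nonneg_of_mem_Icc ⟨by linarith [hψ.1, pi_pos], hψ.2⟩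

lemma continuousOn_sin_div_add_cos {δ : ℝ} (hδ : 0 < δ) :
    ContinuousOn (fun ψ => sin ψ / (δ + cos ψ)) (uIcc 0 (π / 2)) :=
  continuousOn_sin.div (by fun_prop) fun _ hψ =>
    (add_pos_of_pos_of_nonneg hδ (cos_nonneg_of_mem_uIcc_zero_pi_div_two hψ)).ne'

lemma integral_sin_div_add_cos {δ : ℝ} (hδ : 0 < δ) :
    ∫ ψ in (0 : ℝ)..(π / 2), sin ψ / (δ + cos ψ) = log (δ + 1) - log δ := by
  have hderiv : ∀ ψ ∈ uIcc 0 (π / 2),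
      HasDerivAt (fun ψ => -log (δ + cos ψ)) (sin ψ / (δ + cos ψ)) ψ := fun ψ hψ =>
    ((((hasDerivAt_cos ψ).const_add δ).log (add_pos_of_pos_of_nonneg hδ
      (cos_nonneg_of_mem_uIcc_zero_pi_div_two hψ)).ne').neg).congr_deriv (by ring)
  rw [intervalIntegral.integral_eq_sub_of_hasDerivAt hderiv
    (continuousOn_sin_div_add_cos hδ).intervalIntegrable, cos_pi_div_two, cos_zero]
  ring_nf

-- With `δ = √(1 - m)`, the integrand of `K` dominates `sin ψ / (δ + cos ψ)`.
lemma neg_log_one_sub_div_two_le_ellipticK (hm : m < 1) : -log (1 - m) / 2 ≤ ellipticK m := by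
  have hδ : 0 < √(1 - m) := sqrt_pos.2 (sub_pos.2 hm)
  calc -log (1 - m) / 2 = 0 - log √(1 - m) := by rw [log_sqrt (sub_pos.2 hm).le]; ring
    _ ≤ log (√(1 - m) + 1) - log √(1 - m) := by
      gcongr
      exact log_nonneg (by linarith)
    _ = ∫ ψ in (0 : ℝ)..(π / 2), sin ψ / (√(1 - m) + cos ψ) := (integral_sin_div_add_cos hδ).symm
    _ ≤ ellipticK m := by
      refine intervalIntegral.integral_mono_on pi_div_two_pos.le
        (continuousOn_sin_div_add_cos hδ).intervalIntegrable
        ((continuous_ellipticK_integrand hm).intervalIntegrable _ _) fun ψ hψ => ?_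
      exact div_le_div₀ zero_le_one (sin_le_one ψ) (sqrt_pos.2 (one_sub_mul_sin_sq_pos hm ψ))
        (sqrt_one_sub_mul_sin_sq_le hm.le
          (cos_nonneg_of_mem_uIcc_zero_pi_div_two (Icc_subset_uIcc hψ)))

lemma tendsto_ellipticK_nhdsLT_one : Tendsto ellipticK (𝓝[<] 1) atTop := by
  have hsub : Tendsto (fun m : ℝ => 1 - m) (𝓝[<] 1) (𝓝[>] 0) := by
    refine tendsto_nhdsWithin_iff.2 ⟨?_, ?_⟩
    · exact (Continuous.tendsto' (by fun_prop) _ _ (sub_self 1)).mono_left nhdsWithin_le_nhds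
    · filter_upwards [self_mem_nhdsWithin] with m (hm : m < 1) using sub_pos.2 hm
  have hlog : Tendsto (fun m : ℝ => -log (1 - m) / 2) (𝓝[<] 1) atTop :=
    (tendsto_neg_atBot_atTop.comp (tendsto_log_nhdsGT_zero.comp hsub)).atTop_div_const two_pos
  refine tendsto_atTop_mono' _ ?_ hlog
  filter_upwards [self_mem_nhdsWithin] with m hm using neg_log_one_sub_div_two_le_ellipticK hm

lemma abs_ellipticE_le_pi_div_two (hm : 0 ≤ m) : |ellipticE m| ≤ π / 2 := by
  have hle : ∀ ψ ∈ uIoc 0 (π / 2), ‖√(1 - m * sin ψ ^ 2)‖ ≤ 1 := fun ψ _ => by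
    rw [norm_of_nonneg (sqrt_nonneg _), sqrt_le_one]
    exact sub_le_self _ (by positivity)
  simpa [ellipticE, abs_of_pos pi_div_two_pos] using
    intervalIntegral.norm_integral_le_of_norm_le_const hle

lemma abs_one_sub_mul_ellipticPi_sub_ellipticK_le (hn : n < 1) (hm : m < 1) :
    |(1 - n) * ellipticPi n m - ellipticK m| ≤ |n| / min 1 (1 - n) * (π / 2) := by
  rw [ellipticPi, ellipticK, ← intervalIntegral.integral_const_mul,
    ← intervalIntegral.integral_sub
      (((continuous_ellipticPi_integrand hn hm).const_mul _).intervalIntegrable _ _)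
      ((continuous_ellipticK_integrand hm).intervalIntegrable _ _)]
  have hbound := intervalIntegral.norm_integral_le_of_norm_le_const (a := 0) (b := π / 2)
    fun ψ _ => (norm_eq_abs _).trans_le (abs_one_sub_mul_ellipticPi_integrand_sub_le hn hm ψ)
  rwa [sub_zero, abs_of_pos pi_div_two_pos] at hbound

lemma tendsto_ellipticK_sub_ellipticE_nhdsLT_one :
    Tendsto (fun m => ellipticK m - ellipticE m) (𝓝[<] 1) atTop := by
  refine tendsto_atTop_mono' _ ?_
    (tendsto_atTop_add_const_right _ (-(π / 2)) tendsto_ellipticK_nhdsLT_one)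
  filter_upwards [nhdsWithin_le_nhds (lt_mem_nhds one_pos)] with m hm
  linarith [(abs_le.1 (abs_ellipticE_le_pi_div_two hm.le)).2]

lemma tendsto_one_sub_mul_ellipticPi_div {n₀ : ℝ} (hn₀ : n₀ < 1) :
    Tendsto (fun p : ℝ × ℝ => (1 - p.1) * ellipticPi p.1 p.2 / (ellipticK p.2 - ellipticE p.2))
      (𝓝 n₀ ×ˢ 𝓝[<] 1) (𝓝 1) := by
  have hKE : Tendsto (fun p : ℝ × ℝ => ellipticK p.2 - ellipticE p.2) (𝓝 n₀ ×ˢ 𝓝[<] 1) atTop :=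
    tendsto_ellipticK_sub_ellipticE_nhdsLT_one.comp tendsto_snd
  have hmin : min 1 (1 - n₀) ≠ 0 := (lt_min one_pos (sub_pos.2 hn₀)).ne'
  have hbound : Tendsto (fun p : ℝ × ℝ => |p.1| / min 1 (1 - p.1) * (π / 2) + π / 2)
      (𝓝 n₀ ×ˢ 𝓝[<] 1) (𝓝 (|n₀| / min 1 (1 - n₀) * (π / 2) + π / 2)) := by
    have hcont : ContinuousAt (fun n : ℝ => |n| / min 1 (1 - n) * (π / 2) + π / 2) n₀ := by
      fun_prop (disch := exact hmin)
    exact hcont.tendsto.comp tendsto_fst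
  have herror : Tendsto (fun p : ℝ × ℝ =>
      ((1 - p.1) * ellipticPi p.1 p.2 - ellipticK p.2 + ellipticE p.2) /
        (ellipticK p.2 - ellipticE p.2)) (𝓝 n₀ ×ˢ 𝓝[<] 1) (𝓝 0) := by
    refine squeeze_zero_norm' ?_ (hbound.div_atTop hKE)
    filter_upwards [tendsto_fst.eventually_lt_const hn₀, tendsto_snd.eventually self_mem_nhdsWithin,
      tendsto_snd.eventually (nhdsWithin_le_nhds (lt_mem_nhds one_pos)),
      hKE.eventually_gt_atTop 0] with p hn hm hm0 hpos
    rw [norm_div, norm_of_nonneg hpos.le]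
    gcongr
    exact (abs_add_le _ _).trans (add_le_add
      (abs_one_sub_mul_ellipticPi_sub_ellipticK_le hn hm) (abs_ellipticE_le_pi_div_two hm0.le))
  have hlim := herror.const_add 1
  rw [add_zero] at hlim
  refine hlim.congr' ?_
  filter_upwards [hKE.eventually_gt_atTop 0] with p hpos
  rw [one_add_div hpos.ne']
  ring_nf

end Integrals

section WhithamSpeed

variable {ν a b c : ℝ}

/-- The parameter `s² = (u² - u¹)(u³ + ν) / ((u³ - u¹)(u² + ν))` of the elliptic integrals, at
the Riemann invariants `(u¹, u², u³) = (a, b, c)`. -/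
noncomputable def whithamParameter (ν a b c : ℝ) : ℝ :=
  (b - a) * (c + ν) / ((c - a) * (b + ν))

/-- The characteristic `ρ² = (u² - u¹) / (u² + ν)` of the elliptic integral of the third kind, at
the Riemann invariants `(u¹, u²) = (a, b)`. -/
noncomputable def whithamCharacteristic (ν a b : ℝ) : ℝ :=
  (b - a) / (b + ν)

/-- The first characteristic speed `C¹` of the one-phase Camassa–Holm Whitham equations, at the
Riemann invariants `(u¹, u², u³) = (a, b, c)`. -/
noncomputable def whithamSpeed (ν a b c : ℝ) : ℝ :=
  a + b + c + 2 * ν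
    + 2 * (a + ν) * (a - b) * ellipticPi (whithamCharacteristic ν a b) (whithamParameter ν a b c)
      / ((b + ν) * (ellipticK (whithamParameter ν a b c) - ellipticE (whithamParameter ν a b c)))

lemma one_sub_whithamCharacteristic (hb : b + ν ≠ 0) :
    1 - whithamCharacteristic ν a b = (a + ν) / (b + ν) := by
  rw [whithamCharacteristic, one_sub_div hb]
  ring_nf

lemma one_sub_whithamParameter (hb : b + ν ≠ 0) (hc : c - a ≠ 0) :
    1 - whithamParameter ν a b c = (a + ν) / (b + ν) * ((c - b) / (c - a)) := by
  rw [whithamParameter]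
  field_simp
  ring

lemma whithamSpeed_eq (hb : b + ν ≠ 0) :
    whithamSpeed ν a b c = a + b + c + 2 * ν + 2 * (a - b) *
      ((1 - whithamCharacteristic ν a b)
        * ellipticPi (whithamCharacteristic ν a b) (whithamParameter ν a b c)
        / (ellipticK (whithamParameter ν a b c) - ellipticE (whithamParameter ν a b c))) := by
  rw [whithamSpeed, one_sub_whithamCharacteristic hb, ← div_div]
  ring

lemma add_div_add_pos_of_neg_notMem_Icc (hab : a < b) (hν : -ν ∉ Icc a b) :
    0 < (a + ν) / (b + ν) := by
  rcases lt_or_ge (-ν) a with hνa | haν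
  · exact div_pos (by linarith) (by linarith)
  · have hbν : b < -ν := lt_of_not_ge fun hνb => hν ⟨haν, hνb⟩
    exact div_pos_of_neg_of_neg (by linarith) (by linarith)

end WhithamSpeed

section Coalescence

variable {α : Type*} {l : Filter α} {ν u v : ℝ} {a b c : α → ℝ}

lemma tendsto_whithamCharacteristic (hv : v + ν ≠ 0) (ha : Tendsto a l (𝓝 u))
    (hb : Tendsto b l (𝓝 v)) :
    Tendsto (fun x => whithamCharacteristic ν (a x) (b x)) l (𝓝 (whithamCharacteristic ν u v)) :=
  (hb.sub ha).div (hb.add_const ν) hv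

lemma tendsto_whithamParameter_nhdsLT_one (huv : u < v) (hν : -ν ∉ Icc u v)
    (ha : Tendsto a l (𝓝 u)) (hb : Tendsto b l (𝓝 v)) (hc : Tendsto c l (𝓝 v))
    (hbc : ∀ᶠ x in l, b x < c x) :
    Tendsto (fun x => whithamParameter ν (a x) (b x) (c x)) l (𝓝[<] 1) := by
  have hratio : 0 < (u + ν) / (v + ν) := add_div_add_pos_of_neg_notMem_Icc huv hν
  have hvν : v + ν ≠ 0 := (div_ne_zero_iff.1 hratio.ne').2
  have hvu : v - u ≠ 0 := (sub_pos.2 huv).ne'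
  have hlim : Tendsto (fun x => whithamParameter ν (a x) (b x) (c x)) l
      (𝓝 ((v - u) * (v + ν) / ((v - u) * (v + ν)))) :=
    ((hb.sub ha).mul (hc.add_const ν)).div ((hc.sub ha).mul (hb.add_const ν)) (mul_ne_zero hvu hvν)
  rw [div_self (mul_ne_zero hvu hvν)] at hlim
  refine tendsto_nhdsWithin_iff.2 ⟨hlim, ?_⟩
  have hratio' : ∀ᶠ x in l, 0 < (a x + ν) / (b x + ν) :=
    ((ha.add_const ν).div (hb.add_const ν) hvν).eventually_const_lt hratio
  filter_upwards [hratio', hbc, (hb.add_const ν).eventually_ne hvν, ha.eventually_lt hc huv]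
    with x hpos hbc hbν hac
  rw [mem_Iio, ← sub_pos, one_sub_whithamParameter hbν (sub_pos.2 hac).ne']
  exact mul_pos hpos (div_pos (sub_pos.2 hbc) (sub_pos.2 hac))

theorem stmt_7_general (huv : u < v) (hν : -ν ∉ Icc u v) (ha : Tendsto a l (𝓝 u))
    (hb : Tendsto b l (𝓝 v)) (hc : Tendsto c l (𝓝 v)) (hbc : ∀ᶠ x in l, b x < c x) :
    Tendsto (fun x => whithamSpeed ν (a x) (b x) (c x)) l (𝓝 (3 * u + 2 * ν)) := by
  have hratio : 0 < (u + ν) / (v + ν) := add_div_add_pos_of_neg_notMem_Icc huv hν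
  have hvν : v + ν ≠ 0 := (div_ne_zero_iff.1 hratio.ne').2
  have hn₀ : whithamCharacteristic ν u v < 1 := by
    rwa [← sub_pos, one_sub_whithamCharacteristic hvν]
  have hquot := (tendsto_one_sub_mul_ellipticPi_div hn₀).comp
    ((tendsto_whithamCharacteristic hvν ha hb).prodMk
      (tendsto_whithamParameter_nhdsLT_one huv hν ha hb hc hbc))
  have hspeed := (((ha.add hb).add hc).add_const (2 * ν)).add
    (((ha.sub hb).const_mul 2).mul hquot)
  rw [show u + v + v + 2 * ν + 2 * (u - v) * 1 = 3 * u + 2 * ν by ring] at hspeed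
  refine hspeed.congr' ?_
  filter_upwards [(hb.add_const ν).eventually_ne hvν] with x hbν using (whithamSpeed_eq hbν).symm

end Coalescence

/-- when the two largest Riemann invariants coalesce (`u² = v−ε`, `u³ = v+ε`,
`ε → 0⁺`), the first Camassa–Holm Whitham characteristic speed tends to `3u¹ + 2ν`,
recovering the dispersionless Camassa–Holm equation. Here `C¹(a,b,c) = a+b+c+2ν +
2(a+ν)(a−b)Π(ρ²,s)/((b+ν)(K(s)−E(s)))` with `s² = (b−a)(c+ν)/((c−a)(b+ν))`,
`ρ² = (b−a)/(b+ν)`. -/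
theorem stmt_7 (ν u1 v : ℝ) (h0 : -ν < u1) (h1 : u1 < v)
    (Kf Ef : ℝ → ℝ) (Pf : ℝ → ℝ → ℝ)
    (hKf : ∀ m, Kf m = ∫ ψ in (0:ℝ)..(Real.pi / 2), 1 / Real.sqrt (1 - m * Real.sin ψ ^ 2))
    (hEf : ∀ m, Ef m = ∫ ψ in (0:ℝ)..(Real.pi / 2), Real.sqrt (1 - m * Real.sin ψ ^ 2))
    (hPf : ∀ n m, Pf n m = ∫ ψ in (0:ℝ)..(Real.pi / 2),
        1 / ((1 - n * Real.sin ψ ^ 2) * Real.sqrt (1 - m * Real.sin ψ ^ 2)))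
    (C1 : ℝ → ℝ → ℝ → ℝ)
    (hC1 : ∀ a b c, C1 a b c =
      a + b + c + 2 * ν
        + 2 * (a + ν) * (a - b) * Pf ((b - a) / (b + ν)) ((b - a) * (c + ν) / ((c - a) * (b + ν)))
          / ((b + ν) * (Kf ((b - a) * (c + ν) / ((c - a) * (b + ν)))
              - Ef ((b - a) * (c + ν) / ((c - a) * (b + ν)))))) :
    Filter.Tendsto (fun ε => C1 u1 (v - ε) (v + ε)) (nhdsWithin 0 (Set.Ioi 0))
      (nhds (3 * u1 + 2 * ν)) := by
  have hid : Tendsto id (𝓝[>] (0 : ℝ)) (𝓝 0) := tendsto_id.mono_left nhdsWithin_le_nhds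
  have hlt : ∀ᶠ ε in 𝓝[>] (0 : ℝ), v - ε < v + ε := by
    filter_upwards [self_mem_nhdsWithin] with ε (hε : 0 < ε) using by linarith
  obtain rfl : Kf = ellipticK := funext hKf
  obtain rfl : Ef = ellipticE := funext hEf
  obtain rfl : Pf = ellipticPi := funext₂ hPf
  obtain rfl : C1 = whithamSpeed ν := funext₃ hC1
  exact stmt_7_general h1 (fun hν => hν.1.not_gt h0) tendsto_const_nhds
    (by simpa using hid.const_sub v) (by simpa using hid.const_add v) hlt
end
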